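/- For n ≥ 2, the total number over k = 1,...,n-1 of nested families of k intervals of {1,...,n} (each of size ≥ 2, containing {1,...,n}, pairwise nested or disjoint) equals Σ_{k=1}^{n-1} (1/k)·C(n-2,k-1)·C(n+k-1,k-1), which is the total number of dissections (by any number of noncrossing diagonals, including zero) of a convex (n+1)-gon, the (n-1)-st super-Catalan (little Schröder) number. -/

import Mathlib

/-- A nested family of `k` intervals of `{1,...,n}`: each of cardinality ≥ 2,
containing the full interval, any two nested or disjoint. -/
def IsIntNested (n k : ℕ) (S : Finset (Finset ℕ)) : Prop :=
  S.card = k ∧ Finset.Icc 1 n ∈ S ∧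
  (∀ A ∈ S, 2 ≤ A.card ∧ ∃ i j, 1 ≤ i ∧ i ≤ j ∧ j ≤ n ∧ A = Finset.Icc i j) ∧
  (∀ A ∈ S, ∀ B ∈ S, A ⊆ B ∨ B ⊆ A ∨ Disjoint A B)

/-!
Encode intervals as half-open, and let `G` and `Y` be the generating series, by length, of all
nested families and of those containing their ground interval, each family weighted by `t ^ card`.
Splitting a family at its last maximal block gives `G = 1 + G * Y`; adding or removing the ground
interval gives `(1 + t) * Y + t = X + t * G`. Eliminating `G` leaves the quadratic
`(1 + t) * Y ^ 2 = (1 + X) * Y - X`. Differentiating it yields a linear differential equation, that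
is, a three-term recurrence in the length for the coefficients of `Y`, and the Kirkman–Cayley
numbers satisfy the same recurrence.
-/

section Combinatorics

open Finset

/-- Two half-open intervals `[p.1, p.2)` and `[q.1, q.2)` are nested or disjoint, in terms of their
endpoints. -/
abbrev NestedOrDisjoint (p q : ℕ × ℕ) : Prop :=
  (q.1 ≤ p.1 ∧ p.2 ≤ q.2) ∨ (p.1 ≤ q.1 ∧ q.2 ≤ p.2) ∨ p.2 ≤ q.1 ∨ q.2 ≤ p.1

/-- The half-open intervals `[i, j) ⊆ [a, b)` of length at least two, each encoded as `(i, j)`.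
Half-open intervals make lengths additive under concatenation. -/
def longIntervals (a b : ℕ) : Finset (ℕ × ℕ) :=
  {p ∈ Icc a b ×ˢ Icc a b | p.1 + 2 ≤ p.2}

/-- The families of pairwise nested or disjoint long intervals inside `[a, b)`: the noncrossing
bracketings of the word `a, …, b - 1`. -/
def nestedFamilies (a b : ℕ) : Finset (Finset (ℕ × ℕ)) :=
  {S ∈ (longIntervals a b).powerset | ∀ p ∈ S, ∀ q ∈ S, NestedOrDisjoint p q}

/-- The nested families containing their whole ground interval `[a, b)`. By convention the empty
family on a singleton `[a, a + 1)` is rooted too; an empty ground interval has no rooted family. -/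
def rootedFamilies (a b : ℕ) : Finset (Finset (ℕ × ℕ)) :=
  {S ∈ nestedFamilies a b | (a, b) ∈ S ∨ b = a + 1}

variable {a b j : ℕ} {S T U : Finset (ℕ × ℕ)}

lemma mem_longIntervals {p : ℕ × ℕ} :
    p ∈ longIntervals a b ↔ a ≤ p.1 ∧ p.1 + 2 ≤ p.2 ∧ p.2 ≤ b := by
  simp only [longIntervals, mem_filter, mem_product, mem_Icc]
  omega

lemma mem_nestedFamilies : S ∈ nestedFamilies a b ↔
    (∀ p ∈ S, a ≤ p.1 ∧ p.1 + 2 ≤ p.2 ∧ p.2 ≤ b) ∧ ∀ p ∈ S, ∀ q ∈ S, NestedOrDisjoint p q := by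
  simp only [nestedFamilies, mem_filter, mem_powerset, subset_iff, mem_longIntervals]

lemma mem_rootedFamilies :
    S ∈ rootedFamilies a b ↔ S ∈ nestedFamilies a b ∧ ((a, b) ∈ S ∨ b = a + 1) := by
  rw [rootedFamilies, mem_filter]

lemma subset_longIntervals (hS : S ∈ nestedFamilies a b) : S ⊆ longIntervals a b :=
  mem_powerset.1 (mem_filter.1 hS).1

lemma nestedFamilies_eq_singleton_empty (h : b ≤ a + 1) : nestedFamilies a b = {∅} := by
  ext S
  simp only [mem_nestedFamilies, mem_singleton, eq_empty_iff_forall_notMem]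
  grind

lemma rootedFamilies_self (a : ℕ) : rootedFamilies a a = ∅ := by
  simp [rootedFamilies, nestedFamilies_eq_singleton_empty]

lemma rootedFamilies_succ (a : ℕ) : rootedFamilies a (a + 1) = {∅} := by
  simp [rootedFamilies, nestedFamilies_eq_singleton_empty]

lemma nestedFamilies_of_subset (hS : S ∈ nestedFamilies a b) (hTS : T ⊆ S) :
    T ∈ nestedFamilies a b := by
  rw [mem_nestedFamilies] at hS ⊢
  exact ⟨fun p hp => hS.1 p (hTS hp), fun p hp q hq => hS.2 p (hTS hp) q (hTS hq)⟩

lemma insert_mem_nestedFamilies (h : a + 2 ≤ b) (hS : S ∈ nestedFamilies a b) :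
    insert (a, b) S ∈ nestedFamilies a b := by
  rw [mem_nestedFamilies] at hS ⊢
  grind

lemma map_add_mem_rootedFamilies (c : ℕ) :
    S.map (addRightEmbedding (c, c)) ∈ rootedFamilies (a + c) (b + c) ↔
      S ∈ rootedFamilies a b := by
  simp only [mem_rootedFamilies, mem_nestedFamilies, mem_map, addRightEmbedding_apply, Prod.exists,
    Prod.mk_add_mk, forall_exists_index, and_imp, Prod.forall, Prod.mk.injEq,
    Nat.add_right_cancel_iff, exists_eq_right_right, exists_eq_right]
  grind

lemma exists_map_add_eq {c : ℕ} (hS : S ∈ nestedFamilies (a + c) b) :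
    ∃ T : Finset (ℕ × ℕ), T.map (addRightEmbedding (c, c)) = S := by
  rw [mem_nestedFamilies] at hS
  refine ⟨S.image fun p => p - (c, c), ?_⟩
  ext p
  simp only [mem_map, mem_image, Prod.exists, Prod.mk_sub_mk, addRightEmbedding_apply,
    Prod.mk.injEq, Prod.mk_add_mk, ↓existsAndEq, and_true]
  grind

/-- The left end of the maximal block of `S` that ends at `b`, where a point covered by no
interval of `S` is a block of its own. -/
noncomputable def lastBlockStart (b : ℕ) (S : Finset (ℕ × ℕ)) : ℕ :=
  sInf {i | (i, b) ∈ S ∨ b = i + 1}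

lemma isLeast_lastBlockStart (hb : 0 < b) (S : Finset (ℕ × ℕ)) :
    IsLeast {i | (i, b) ∈ S ∨ b = i + 1} (lastBlockStart b S) :=
  isLeast_csInf ⟨b - 1, Or.inr (Nat.sub_add_cancel hb).symm⟩

lemma lastBlockStart_mem_Ico (hab : a < b) (hS : S ∈ nestedFamilies a b) :
    lastBlockStart b S ∈ Ico a b := by
  have hmem := (isLeast_lastBlockStart (Nat.zero_lt_of_lt hab) S).1
  rw [mem_nestedFamilies] at hS
  grind

lemma le_or_le_lastBlockStart {p : ℕ × ℕ} (hS : S ∈ nestedFamilies a b) (hp : p ∈ S) :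
    p.2 ≤ lastBlockStart b S ∨ lastBlockStart b S ≤ p.1 := by
  rw [mem_nestedFamilies] at hS
  obtain ⟨hmem, hle⟩ := isLeast_lastBlockStart (b := b) (by grind) S
  rw [mem_lowerBounds] at hle
  have hmin := hle p.1
  have hlong := hS.1 p hp
  rcases hmem with hblock | hsingleton
  · have hnested := hS.2 p hp _ hblock
    grind
  · grind

lemma filter_snd_le_mem (hS : S ∈ nestedFamilies a b) (j : ℕ) :
    {p ∈ S | p.2 ≤ j} ∈ nestedFamilies a j := by
  rw [mem_nestedFamilies] at hS ⊢
  grind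

lemma filter_le_fst_mem (hS : S ∈ nestedFamilies a b) (hj : (j, b) ∈ S ∨ b = j + 1) :
    {p ∈ S | j ≤ p.1} ∈ rootedFamilies j b := by
  rw [mem_rootedFamilies, mem_nestedFamilies]
  rw [mem_nestedFamilies] at hS
  grind

lemma union_mem_nestedFamilies (hj : j ∈ Ico a b)
    (hT : T ∈ nestedFamilies a j) (hU : U ∈ nestedFamilies j b) : T ∪ U ∈ nestedFamilies a b := by
  rw [mem_nestedFamilies] at *
  grind

lemma lastBlockStart_union (hj : j < b)
    (hT : T ∈ nestedFamilies a j) (hU : U ∈ rootedFamilies j b) :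
    lastBlockStart b (T ∪ U) = j := by
  rw [mem_rootedFamilies, mem_nestedFamilies] at hU
  rw [mem_nestedFamilies] at hT
  refine IsLeast.csInf_eq ⟨?_, ?_⟩
  · grind
  · rw [mem_lowerBounds]
    grind

lemma disjoint_of_mem_nestedFamilies (hT : T ∈ nestedFamilies a j) (hU : U ∈ nestedFamilies j b) :
    Disjoint T U := by
  rw [mem_nestedFamilies] at hT hU
  rw [disjoint_left]
  grind

lemma filter_snd_le_union (hT : T ∈ nestedFamilies a j) (hU : U ∈ nestedFamilies j b) :
    {p ∈ T ∪ U | p.2 ≤ j} = T := by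
  rw [mem_nestedFamilies] at hT hU
  grind

lemma filter_le_fst_union (hT : T ∈ nestedFamilies a j) (hU : U ∈ nestedFamilies j b) :
    {p ∈ T ∪ U | j ≤ p.1} = U := by
  rw [mem_nestedFamilies] at hT hU
  grind

variable {R : Type*} [CommSemiring R] (t : R)

/-- The generating polynomial of a finite set of families by cardinality, evaluated at `t`. -/
def weight (F : Finset (Finset (ℕ × ℕ))) : R := ∑ S ∈ F, t ^ #S

lemma weight_filter_root_mem (h : a + 2 ≤ b) :
    weight t {S ∈ nestedFamilies a b | (a, b) ∈ S} =
      t * weight t {S ∈ nestedFamilies a b | (a, b) ∉ S} := by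
  rw [weight, weight, mul_sum]
  refine sum_bij' (fun S _ => S.erase (a, b)) (fun S _ => insert (a, b) S) ?_ ?_ ?_ ?_ ?_
  · intro S hS
    rw [mem_filter] at hS ⊢
    exact ⟨nestedFamilies_of_subset hS.1 (erase_subset _ _), notMem_erase _ _⟩
  · intro S hS
    rw [mem_filter] at hS ⊢
    exact ⟨insert_mem_nestedFamilies h hS.1, mem_insert_self _ _⟩
  · exact fun S hS => insert_erase (mem_filter.1 hS).2
  · exact fun S hS => erase_insert (mem_filter.1 hS).2
  · intro S hS
    rw [← pow_succ', card_erase_add_one (mem_filter.1 hS).2]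

lemma one_add_mul_weight_rootedFamilies (h : a + 2 ≤ b) :
    (1 + t) * weight t (rootedFamilies a b) = t * weight t (nestedFamilies a b) := by
  have hrooted : rootedFamilies a b = {S ∈ nestedFamilies a b | (a, b) ∈ S} := by
    simp [rootedFamilies, show b ≠ a + 1 by omega]
  have hsplit : weight t (nestedFamilies a b) = weight t {S ∈ nestedFamilies a b | (a, b) ∈ S} +
      weight t {S ∈ nestedFamilies a b | (a, b) ∉ S} :=
    (sum_filter_add_sum_filter_not _ _ _).symm
  rw [hrooted, hsplit, weight_filter_root_mem t h]
  ring

lemma weight_rootedFamilies_add (a b c : ℕ) :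
    weight t (rootedFamilies (a + c) (b + c)) = weight t (rootedFamilies a b) := by
  symm
  refine sum_nbij (map (addRightEmbedding (c, c))) ?_ ?_ ?_ ?_
  · exact fun S hS => (map_add_mem_rootedFamilies c).2 hS
  · exact (map_injective _).injOn
  · intro S hS
    obtain ⟨T, rfl⟩ := exists_map_add_eq (mem_rootedFamilies.1 hS).1
    exact ⟨T, (map_add_mem_rootedFamilies c).1 hS, rfl⟩
  · exact fun S _ => by rw [card_map]

lemma weight_filter_lastBlockStart_eq (hj : j ∈ Ico a b) :
    weight t {S ∈ nestedFamilies a b | lastBlockStart b S = j} =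
      weight t (nestedFamilies a j) * weight t (rootedFamilies j b) := by
  have hb : 0 < b := by grind
  simp only [weight]
  rw [sum_mul_sum, ← sum_product']
  symm
  refine sum_nbij' (fun P => P.1 ∪ P.2)
    (fun S => ({p ∈ S | p.2 ≤ j}, {p ∈ S | j ≤ p.1})) ?_ ?_ ?_ ?_ ?_
  · rintro ⟨T, U⟩ hTU
    obtain ⟨hT, hU⟩ := mem_product.1 hTU
    exact mem_filter.2 ⟨union_mem_nestedFamilies hj hT (mem_rootedFamilies.1 hU).1,
      lastBlockStart_union (mem_Ico.1 hj).2 hT hU⟩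
  · intro S hS
    obtain ⟨hmem, rfl⟩ := mem_filter.1 hS
    exact mem_product.2 ⟨filter_snd_le_mem hmem _,
      filter_le_fst_mem hmem (isLeast_lastBlockStart hb S).1⟩
  · rintro ⟨T, U⟩ hTU
    obtain ⟨hT, hU⟩ := mem_product.1 hTU
    have hU := (mem_rootedFamilies.1 hU).1
    exact Prod.ext (filter_snd_le_union hT hU) (filter_le_fst_union hT hU)
  · intro S hS
    obtain ⟨hmem, rfl⟩ := mem_filter.1 hS
    dsimp only
    rw [← filter_or]
    exact filter_true_of_mem fun p hp => le_or_le_lastBlockStart hmem hp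
  · rintro ⟨T, U⟩ hTU
    obtain ⟨hT, hU⟩ := mem_product.1 hTU
    rw [← pow_add, card_union_of_disjoint
      (disjoint_of_mem_nestedFamilies hT (mem_rootedFamilies.1 hU).1)]

lemma weight_nestedFamilies_eq_sum (hab : a < b) :
    weight t (nestedFamilies a b) =
      ∑ j ∈ Ico a b, weight t (nestedFamilies a j) * weight t (rootedFamilies j b) := by
  calc weight t (nestedFamilies a b)
    _ = ∑ j ∈ Ico a b, weight t {S ∈ nestedFamilies a b | lastBlockStart b S = j} :=
      (sum_fiberwise_of_maps_to (fun S hS => lastBlockStart_mem_Ico hab hS) _).symm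
    _ = _ := sum_congr rfl fun j hj => weight_filter_lastBlockStart_eq t hj

lemma weight_nestedFamilies_eq_sum_antidiagonal (n : ℕ) :
    weight t (nestedFamilies 0 (n + 1)) = ∑ p ∈ antidiagonal (n + 1),
      weight t (nestedFamilies 0 p.1) * weight t (rootedFamilies 0 p.2) := by
  rw [weight_nestedFamilies_eq_sum t n.succ_pos, Nat.Ico_zero_eq_range,
    Nat.sum_antidiagonal_eq_sum_range_succ
      (fun i j => weight t (nestedFamilies 0 i) * weight t (rootedFamilies 0 j)),
    sum_range_succ _ (n + 1), Nat.sub_self, rootedFamilies_self]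
  simp only [weight, sum_empty, mul_zero, add_zero]
  refine sum_congr rfl fun j hj => ?_
  have hshift := weight_rootedFamilies_add t 0 (n + 1 - j) j
  rw [zero_add, Nat.sub_add_cancel (mem_range.1 hj).le] at hshift
  exact congrArg _ hshift

end Combinatorics

section Series

open PowerSeries

variable {R : Type*}

/-- The generating series of nested families by length of the ground interval. -/
def nestedSeries [CommSemiring R] (t : R) : R⟦X⟧ := mk fun n => weight t (nestedFamilies 0 n)

/-- The generating series of rooted nested families by length of the ground interval. -/
def rootedSeries [CommSemiring R] (t : R) : R⟦X⟧ := mk fun n => weight t (rootedFamilies 0 n)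

lemma nestedSeries_eq [CommSemiring R] (t : R) :
    nestedSeries t = 1 + nestedSeries t * rootedSeries t := by
  ext n
  rw [map_add, coeff_mul, coeff_one]
  simp only [nestedSeries, rootedSeries, coeff_mk]
  cases n with
  | zero => simp [nestedFamilies_eq_singleton_empty, rootedFamilies_self, weight]
  | succ n => rw [weight_nestedFamilies_eq_sum_antidiagonal, if_neg n.succ_ne_zero, zero_add]

lemma rootedSeries_eq [CommSemiring R] (t : R) :
    (1 + C t) * rootedSeries t + C t = X + C t * nestedSeries t := by
  ext n
  rw [map_add, map_add, ← map_one C, ← map_add C, coeff_C_mul, coeff_C_mul, coeff_C, coeff_X]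
  simp only [nestedSeries, rootedSeries, coeff_mk]
  match n with
  | 0 => simp [nestedFamilies_eq_singleton_empty, rootedFamilies_self, weight]
  | 1 => simp [nestedFamilies_eq_singleton_empty, rootedFamilies_succ, weight]
  | n + 2 => simp [one_add_mul_weight_rootedFamilies]

lemma rootedSeries_quadratic [CommRing R] (t : R) :
    (1 + C t) * rootedSeries t ^ 2 = (1 + X) * rootedSeries t - X := by
  linear_combination (rootedSeries t - 1) * rootedSeries_eq t - C t * nestedSeries_eq t

lemma constantCoeff_rootedSeries [CommSemiring R] (t : R) :
    constantCoeff (rootedSeries t) = 0 := by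
  rw [← coeff_zero_eq_constantCoeff_apply, rootedSeries, coeff_mk, rootedFamilies_self, weight,
    Finset.sum_empty]

variable [CommRing R] {t : R} {Y : R⟦X⟧}

lemma derivative_of_quadratic (hY : (1 + C t) * Y ^ 2 = (1 + X) * Y - X) :
    (1 - 2 * (1 + 2 * C t) * X + X ^ 2) * derivative R Y = (X - 1 - 2 * C t) * Y + 1 - X := by
  have hder : (1 + C t) * (2 * Y * derivative R Y) = Y + (1 + X) * derivative R Y - 1 := by
    have := congrArg (derivative R) hY
    simp only [map_sub, map_add, Derivation.leibniz, Derivation.leibniz_pow, smul_eq_mul,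
      derivative_C, derivative_X, Derivation.map_one_eq_zero, nsmul_eq_mul] at this
    push_cast at this
    linear_combination this
  linear_combination (2 * (1 + C t) * Y - 1 - X) * hder + (2 - 4 * (1 + C t) * derivative R Y) * hY

lemma coeff_rec_of_quadratic (hY : (1 + C t) * Y ^ 2 = (1 + X) * Y - X) (m : ℕ) :
    (m + 3) * coeff (m + 3) Y =
      (2 * m + 3) * (1 + 2 * t) * coeff (m + 2) Y - m * coeff (m + 1) Y := by
  have hode : derivative R Y - C (2 * (1 + 2 * t)) * (X * derivative R Y)
      + X * (X * derivative R Y) = X * Y - C (1 + 2 * t) * Y + 1 - X := by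
    simp only [map_mul, map_add, map_one, map_ofNat]
    linear_combination derivative_of_quadratic hY
  have hcoeff := congrArg (coeff (m + 2)) hode
  simp only [map_sub, map_add (coeff (m + 2)), coeff_C_mul, coeff_succ_X_mul, coeff_derivative,
    coeff_X, coeff_one, if_neg (Nat.succ_ne_zero _), if_neg (show m + 2 ≠ 1 by omega), add_assoc,
    Nat.reduceAdd] at hcoeff
  push_cast at hcoeff
  linear_combination hcoeff

lemma coeff_one_of_quadratic (hY : (1 + C t) * Y ^ 2 = (1 + X) * Y - X)
    (h0 : constantCoeff Y = 0) : coeff 1 Y = 1 := by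
  have hsq : coeff 1 (Y ^ 2) = 0 := by
    simp [pow_two, coeff_mul, Finset.Nat.antidiagonal_succ, h0]
  have h := congrArg (coeff 1) hY
  rw [add_mul, add_mul, one_mul, one_mul, map_add, map_sub, map_add, coeff_C_mul,
    coeff_succ_X_mul 0, coeff_zero_eq_constantCoeff_apply, coeff_one_X, hsq, h0] at h
  linear_combination -h

lemma coeff_two_of_quadratic (hY : (1 + C t) * Y ^ 2 = (1 + X) * Y - X)
    (h0 : constantCoeff Y = 0) : coeff 2 Y = t := by
  have h1 := coeff_one_of_quadratic hY h0
  have hsq : coeff 2 (Y ^ 2) = 1 := by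
    simp [pow_two, coeff_mul, Finset.Nat.antidiagonal_succ, h0, h1]
  have h := congrArg (coeff 2) hY
  rw [add_mul, add_mul, one_mul, one_mul, map_add, map_sub, map_add, coeff_C_mul,
    coeff_succ_X_mul 1, coeff_X, if_neg (by decide), hsq, h1] at h
  linear_combination -h

end Series

section Choose

variable {R : Type*} [CommRing R]

lemma cast_choose_succ_mul (n k : ℕ) :
    (n.choose (k + 1) : R) * (k + 1) = n.choose k * (n - k) := by
  rcases le_or_gt k n with hk | hk
  · rw [← Nat.cast_sub hk]
    simpa using congrArg (Nat.cast (R := R)) (Nat.choose_succ_right_eq n k)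
  · simp [Nat.choose_eq_zero_of_lt hk, Nat.choose_eq_zero_of_lt (Nat.lt_succ_of_lt hk)]

lemma cast_succ_choose_mul (n k : ℕ) :
    ((n + 1).choose k : R) * (n + 1 - k) = n.choose k * (n + 1) := by
  rcases le_or_gt k (n + 1) with hk | hk
  · rw [← Nat.cast_add_one, ← Nat.cast_sub hk]
    simpa using congrArg (Nat.cast (R := R)) (Nat.choose_mul_succ_eq n k).symm
  · simp [Nat.choose_eq_zero_of_lt hk, Nat.choose_eq_zero_of_lt (Nat.lt_of_succ_lt hk)]

lemma cast_succ_choose_succ_mul (n k : ℕ) :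
    ((n + 1).choose (k + 1) : R) * (k + 1) = n.choose k * (n + 1) := by
  rw [mul_comm (n.choose k : R)]
  simpa using congrArg (Nat.cast (R := R)) (Nat.add_one_mul_choose_eq n k).symm

end Choose

/-- The Kirkman–Cayley number of rooted nested families of `k` intervals on `m + 2` points;
the shift avoids truncated subtraction. At `k = 0` it is `0`, since `x / 0 = 0`. -/
def kirkmanCayley (m k : ℕ) : ℚ := m.choose (k - 1) * (m + k + 1).choose (k - 1) / k

lemma kirkmanCayley_zero (m : ℕ) : kirkmanCayley m 0 = 0 := by simp [kirkmanCayley]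

lemma kirkmanCayley_one (m : ℕ) : kirkmanCayley m 1 = 1 := by simp [kirkmanCayley]

lemma kirkmanCayley_succ (m k : ℕ) :
    kirkmanCayley m (k + 1) * (k + 1) = m.choose k * (m + k + 2).choose k := by
  rw [kirkmanCayley, Nat.add_sub_cancel, Nat.cast_add_one]
  exact div_mul_cancel₀ _ k.cast_add_one_ne_zero

lemma kirkmanCayley_succ_right (m k : ℕ) :
    kirkmanCayley m (k + 2) * ((k + 1) * (k + 2)) =
      kirkmanCayley m (k + 1) * ((m + k + 3) * (m - k)) := by
  have hN := kirkmanCayley_succ m k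
  have hN' := kirkmanCayley_succ m (k + 1)
  have hA := cast_choose_succ_mul (R := ℚ) m k
  have hB := cast_succ_choose_succ_mul (R := ℚ) (m + k + 2) k
  have hk : (k : ℚ) + 1 ≠ 0 := k.cast_add_one_ne_zero
  apply mul_right_cancel₀ hk
  push_cast at *
  grind

lemma kirkmanCayley_succ_left (m k : ℕ) :
    kirkmanCayley (m + 1) (k + 1) * ((m + 3) * (m + 1 - k)) =
      kirkmanCayley m (k + 1) * ((m + k + 3) * (m + 1)) := by
  have hN := kirkmanCayley_succ m k
  have hN' := kirkmanCayley_succ (m + 1) k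
  have hA := cast_succ_choose_mul (R := ℚ) m k
  have hB := cast_succ_choose_mul (R := ℚ) (m + k + 2) k
  have hk : (k : ℚ) + 1 ≠ 0 := k.cast_add_one_ne_zero
  apply mul_right_cancel₀ hk
  rw [show m + 1 + k + 2 = m + k + 2 + 1 by ring] at hN'
  push_cast at *
  grind

lemma kirkmanCayley_succ_succ (m k : ℕ) :
    kirkmanCayley (m + 1) (k + 2) * ((m + 3) * (k + 1) * (k + 2)) =
      kirkmanCayley m (k + 1) * ((m + k + 3) * (m + k + 4) * (m + 1)) := by
  have hN := kirkmanCayley_succ m k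
  have hN' := kirkmanCayley_succ (m + 1) (k + 1)
  have hA := cast_succ_choose_succ_mul (R := ℚ) m k
  have hB := cast_succ_choose_mul (R := ℚ) (m + k + 2) k
  have hB' := cast_succ_choose_succ_mul (R := ℚ) (m + k + 3) k
  have hk : (k : ℚ) + 1 ≠ 0 := k.cast_add_one_ne_zero
  apply mul_right_cancel₀ hk
  rw [show m + 1 + (k + 1) + 2 = m + k + 3 + 1 by ring] at hN'
  push_cast at *
  grind

lemma kirkmanCayley_rec (m k : ℕ) :
    (m + 4) * kirkmanCayley (m + 2) (k + 1) =
      (2 * m + 5) * (kirkmanCayley (m + 1) (k + 1) + 2 * kirkmanCayley (m + 1) k)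
        - (m + 1) * kirkmanCayley m (k + 1) := by
  cases k with
  | zero =>
    simp only [zero_add, kirkmanCayley_one, kirkmanCayley_zero]
    ring
  | succ k =>
    have hright := kirkmanCayley_succ_right (m + 1) k
    have hleft := kirkmanCayley_succ_left m (k + 1)
    have hdiag := kirkmanCayley_succ_succ (m + 1) k
    push_cast at hright hleft hdiag
    have hne : ((k : ℚ) + 1) * (k + 2) * (m + k + 4) ≠ 0 := by positivity
    apply mul_right_cancel₀ hne
    linear_combination ((m : ℚ) + k + 4) * hdiag - ((k : ℚ) + 1) * (k + 2) * hleft +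
      (((m : ℚ) + 3) * (m - k) - (2 * m + 5) * (m + k + 4)) * hright

section Coefficients

open Polynomial
open scoped PowerSeries Finset

variable {Y : ℚ[X]⟦X⟧}

lemma coeff_coeff_rec_of_quadratic
    (hY : (1 + PowerSeries.C X) * Y ^ 2 = (1 + PowerSeries.X) * Y - PowerSeries.X) (m k : ℕ) :
    (m + 3) * (PowerSeries.coeff (m + 3) Y).coeff (k + 1) =
      (2 * m + 3) * ((PowerSeries.coeff (m + 2) Y).coeff (k + 1) +
        2 * (PowerSeries.coeff (m + 2) Y).coeff k) -
      m * (PowerSeries.coeff (m + 1) Y).coeff (k + 1) := by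
  have hrec : C ((m : ℚ) + 3) * PowerSeries.coeff (m + 3) Y =
      C (2 * (m : ℚ) + 3) * (PowerSeries.coeff (m + 2) Y +
        C 2 * (X * PowerSeries.coeff (m + 2) Y)) - C (m : ℚ) * PowerSeries.coeff (m + 1) Y := by
    simp only [map_add, map_mul, map_natCast, map_ofNat]
    linear_combination coeff_rec_of_quadratic hY m
  simpa only [coeff_sub, coeff_add, coeff_C_mul, coeff_X_mul] using
    congrArg (fun p => p.coeff (k + 1)) hrec

lemma eq_X_of_quadratic_zero {R : Type*} [CommRing R] [IsDomain R] {Z : R⟦X⟧}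
    (hZ : Z ^ 2 = (1 + PowerSeries.X) * Z - PowerSeries.X)
    (h0 : PowerSeries.constantCoeff Z = 0) : Z = PowerSeries.X := by
  have hfactor : (Z - 1) * (Z - PowerSeries.X) = 0 := by linear_combination hZ
  have hne : Z - 1 ≠ 0 := by
    intro h
    rw [sub_eq_zero.1 h, map_one] at h0
    exact one_ne_zero h0
  exact sub_eq_zero.1 ((mul_eq_zero.1 hfactor).resolve_left hne)

lemma coeff_coeff_zero_of_quadratic
    (hY : (1 + PowerSeries.C X) * Y ^ 2 = (1 + PowerSeries.X) * Y - PowerSeries.X)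
    (h0 : PowerSeries.constantCoeff Y = 0) (m : ℕ) :
    (PowerSeries.coeff (m + 2) Y).coeff 0 = 0 := by
  have hZ : (PowerSeries.map constantCoeff Y) ^ 2 =
      (1 + PowerSeries.X) * PowerSeries.map constantCoeff Y - PowerSeries.X := by
    simpa only [map_mul, map_add, map_sub, map_pow, map_one, PowerSeries.map_X, PowerSeries.map_C,
      constantCoeff_apply, coeff_X_zero, map_zero, add_zero, one_mul] using
      congrArg (PowerSeries.map constantCoeff) hY
  have hZ0 : PowerSeries.constantCoeff (PowerSeries.map constantCoeff Y) = 0 := by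
    rw [← PowerSeries.coeff_zero_eq_constantCoeff_apply, PowerSeries.coeff_map,
      PowerSeries.coeff_zero_eq_constantCoeff_apply, h0, map_zero]
  rw [← constantCoeff_apply, ← PowerSeries.coeff_map, eq_X_of_quadratic_zero hZ hZ0,
    PowerSeries.coeff_X, if_neg (by omega)]

lemma coeff_coeff_of_quadratic
    (hY : (1 + PowerSeries.C X) * Y ^ 2 = (1 + PowerSeries.X) * Y - PowerSeries.X)
    (h0 : PowerSeries.constantCoeff Y = 0) (m k : ℕ) :
    (PowerSeries.coeff (m + 2) Y).coeff k = kirkmanCayley m k := by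
  have h2 : PowerSeries.coeff 2 Y = X := coeff_two_of_quadratic hY h0
  induction m using Nat.twoStepInduction generalizing k with
  | zero =>
    rw [zero_add, h2, coeff_X]
    rcases k with _ | _ | k <;> simp [kirkmanCayley]
  | one =>
    cases k with
    | zero => rw [coeff_coeff_zero_of_quadratic hY h0, kirkmanCayley_zero]
    | succ k =>
      have hrec := coeff_coeff_rec_of_quadratic hY 0 k
      simp only [zero_add, h2, coeff_X, Nat.cast_zero, mul_zero, zero_mul, sub_zero] at hrec
      rw [mul_left_cancel₀ three_ne_zero hrec]
      rcases k with _ | _ | k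
      · simp [kirkmanCayley]
      · norm_num [kirkmanCayley]
      · simp [kirkmanCayley, Nat.choose_eq_zero_of_lt]
  | more m ih₀ ih₁ =>
    cases k with
    | zero => rw [coeff_coeff_zero_of_quadratic hY h0, kirkmanCayley_zero]
    | succ k =>
      have hrec := coeff_coeff_rec_of_quadratic hY (m + 1) k
      rw [ih₀, ih₁, ih₁] at hrec
      apply mul_left_cancel₀ (show (m : ℚ) + 4 ≠ 0 by positivity)
      rw [kirkmanCayley_rec]
      push_cast at hrec
      linear_combination hrec

lemma coeff_weight_X {R : Type*} [CommSemiring R] (F : Finset (Finset (ℕ × ℕ))) (k : ℕ) :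
    (weight (X : R[X]) F).coeff k = #{S ∈ F | #S = k} := by
  simp only [weight, finsetSum_coeff, coeff_X_pow, Finset.natCast_card_filter, eq_comm]

lemma card_rootedFamilies_eq_kirkmanCayley (a m k : ℕ) :
    (#{S ∈ rootedFamilies a (a + m + 2) | #S = k} : ℚ) = kirkmanCayley m k := by
  have hshift := weight_rootedFamilies_add (X : ℚ[X]) 0 (m + 2) a
  rw [zero_add, show m + 2 + a = a + m + 2 by ring] at hshift
  rw [← coeff_weight_X, hshift, ← coeff_coeff_of_quadratic (rootedSeries_quadratic (X : ℚ[X]))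
    (constantCoeff_rootedSeries _), rootedSeries, PowerSeries.coeff_mk]

lemma card_rootedFamilies_mul (a m k : ℕ) :
    #{S ∈ rootedFamilies a (a + m + 2) | #S = k + 1} * (k + 1) =
      m.choose k * (m + k + 2).choose k := by
  have h := kirkmanCayley_succ m k
  rw [← card_rootedFamilies_eq_kirkmanCayley a] at h
  exact_mod_cast h

end Coefficients

section Transfer

open Finset

/-- The set of integers encoded by a pair of endpoints, the right one being excluded. -/
def interval (p : ℕ × ℕ) : Finset ℕ := Ico p.1 p.2

variable {a b n k : ℕ} {p q : ℕ × ℕ} {S : Finset (ℕ × ℕ)}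

lemma interval_subset_interval (hp : p.1 < p.2) :
    interval p ⊆ interval q ↔ q.1 ≤ p.1 ∧ p.2 ≤ q.2 :=
  Ico_subset_Ico_iff hp

lemma interval_injOn : Set.InjOn interval {p | p.1 < p.2} := by
  intro p hp q hq h
  have hpq := (interval_subset_interval hp).1 h.subset
  have hqp := (interval_subset_interval hq).1 h.superset
  ext <;> omega

lemma nestedOrDisjoint_iff_interval (hp : p.1 < p.2) (hq : q.1 < q.2) :
    NestedOrDisjoint p q ↔ interval p ⊆ interval q ∨ interval q ⊆ interval p ∨
      Disjoint (interval p) (interval q) := by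
  rw [interval_subset_interval hp, interval_subset_interval hq, ← disjoint_coe, interval,
    interval, coe_Ico, coe_Ico, Set.Ico_disjoint_Ico]
  grind

lemma interval_injOn_of_subset (hS : S ⊆ longIntervals a b) :
    Set.InjOn interval (S : Set (ℕ × ℕ)) :=
  interval_injOn.mono fun p hp => by
    have := mem_longIntervals.1 (hS hp)
    simp only [Set.mem_ofPred_eq]
    omega

lemma Icc_mem_image_interval_iff (hn : 2 ≤ n) (hS : S ⊆ longIntervals 1 (n + 1)) :
    Icc 1 n ∈ S.image interval ↔ (1, n + 1) ∈ S := by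
  have hroot : (1, n + 1) ∈ longIntervals 1 (n + 1) := mem_longIntervals.2 (by grind)
  have hIcc : Icc 1 n = interval (1, n + 1) := by rw [interval, Ico_add_one_right_eq_Icc]
  rw [hIcc, mem_image]
  refine ⟨?_, fun h => ⟨_, h, rfl⟩⟩
  rintro ⟨p, hp, h⟩
  rwa [← interval_injOn_of_subset Subset.rfl (hS hp) hroot h]

lemma two_le_card_interval_and_exists_eq_Icc (hp : p ∈ longIntervals 1 (n + 1)) :
    2 ≤ #(interval p) ∧ ∃ i j, 1 ≤ i ∧ i ≤ j ∧ j ≤ n ∧ interval p = Icc i j := by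
  rw [mem_longIntervals] at hp
  refine ⟨by grind [interval, Nat.card_Ico], p.1, p.2 - 1, by omega, by omega, by omega, ?_⟩
  rw [interval, ← Ico_add_one_right_eq_Icc, Nat.sub_add_cancel (by omega)]

lemma isIntNested_image_interval_iff (hn : 2 ≤ n) (hS : S ⊆ longIntervals 1 (n + 1)) :
    IsIntNested n k (S.image interval) ↔ S ∈ rootedFamilies 1 (n + 1) ∧ #S = k := by
  have hlt : ∀ p ∈ S, p.1 < p.2 := fun p hp => by
    have := mem_longIntervals.1 (hS hp)
    omega
  have hnested : (∀ A ∈ S.image interval, ∀ B ∈ S.image interval, A ⊆ B ∨ B ⊆ A ∨ Disjoint A B) ↔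
      ∀ p ∈ S, ∀ q ∈ S, NestedOrDisjoint p q := by
    simp only [forall_mem_image]
    exact forall₄_congr fun p hp q hq => (nestedOrDisjoint_iff_interval (hlt p hp) (hlt q hq)).symm
  have hroot : ((1, n + 1) ∈ S ∨ n + 1 = 1 + 1) ↔ (1, n + 1) ∈ S := by
    simp [show n ≠ 1 by omega]
  rw [IsIntNested, card_image_of_injOn (interval_injOn_of_subset hS), hnested,
    Icc_mem_image_interval_iff hn hS, mem_rootedFamilies, nestedFamilies, mem_filter, mem_powerset,
    hroot, forall_mem_image]
  have hlong := fun p hp => two_le_card_interval_and_exists_eq_Icc (p := p) (hS hp)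
  tauto

lemma IsIntNested.exists_image_interval_eq {F : Finset (Finset ℕ)} (hF : IsIntNested n k F) :
    ∃ S ⊆ longIntervals 1 (n + 1), S.image interval = F := by
  refine subset_image_iff.1 fun A hA => ?_
  obtain ⟨hcard, i, j, hi, -, hj, rfl⟩ := hF.2.2.1 A hA
  rw [Nat.card_Icc] at hcard
  exact mem_image.2 ⟨(i, j + 1), mem_longIntervals.2 (by grind), Ico_add_one_right_eq_Icc i j⟩

/-- The families satisfying `IsIntNested n k`, as a finite set (for `2 ≤ n`), listed through their
encoding by half-open intervals. -/
def intNestedFamilies (n k : ℕ) : Finset (Finset (Finset ℕ)) :=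
  {S ∈ rootedFamilies 1 (n + 1) | #S = k}.image (image interval)

lemma mem_intNestedFamilies (hn : 2 ≤ n) {F : Finset (Finset ℕ)} :
    F ∈ intNestedFamilies n k ↔ IsIntNested n k F := by
  simp only [intNestedFamilies, mem_image, mem_filter]
  constructor
  · rintro ⟨S, hS, rfl⟩
    have hsub := subset_longIntervals (mem_rootedFamilies.1 hS.1).1
    exact (isIntNested_image_interval_iff hn hsub).2 hS
  · intro hF
    obtain ⟨S, hS, rfl⟩ := hF.exists_image_interval_eq
    exact ⟨S, (isIntNested_image_interval_iff hn hS).1 hF, rfl⟩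

lemma card_intNestedFamilies (n k : ℕ) :
    #(intNestedFamilies n k) = #{S ∈ rootedFamilies 1 (n + 1) | #S = k} := by
  have hinj := interval_injOn_of_subset (Subset.refl (longIntervals 1 (n + 1)))
  refine card_image_of_injOn ((image_injOn_powerset_of_injOn hinj).mono fun S hS => ?_)
  exact mem_coe.2 (mem_powerset.2
    (subset_longIntervals (mem_rootedFamilies.1 (mem_filter.1 hS).1).1))

lemma card_intNestedFamilies_eq_div (hn : 2 ≤ n) (hk : 1 ≤ k) :
    #(intNestedFamilies n k) = ((n - 2).choose (k - 1) * (n + k - 1).choose (k - 1)) / k := by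
  obtain ⟨m, rfl⟩ := Nat.exists_eq_add_of_le hn
  obtain ⟨j, rfl⟩ := Nat.exists_eq_add_of_le' hk
  rw [card_intNestedFamilies, show 2 + m + 1 = 1 + m + 2 by ring, Nat.add_sub_cancel_left,
    Nat.add_sub_cancel, show 2 + m + (j + 1) - 1 = m + j + 2 by omega]
  exact (Nat.div_eq_of_eq_mul_left j.succ_pos (card_rootedFamilies_mul 1 m j).symm).symm

end Transfer

/-- The total number over `k = 1,...,n-1` of nested interval families (i.e. of all
dissections of a convex `(n+1)`-gon by noncrossing diagonals, the super-Catalan /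
little Schröder number) equals `Σ_{k=1}^{n-1} (1/k)·C(n-2,k-1)·C(n+k-1,k-1)`;
the division is exact. -/
theorem stmt17 (n : ℕ) (hn : 2 ≤ n) :
    Nat.card {S : Finset (Finset ℕ) // ∃ k, 1 ≤ k ∧ k ≤ n - 1 ∧ IsIntNested n k S} =
      ∑ k ∈ Finset.Icc 1 (n - 1),
        ((n - 2).choose (k - 1) * (n + k - 1).choose (k - 1)) / k := by
  have hdisj : (Finset.Icc 1 (n - 1) : Set ℕ).PairwiseDisjoint (intNestedFamilies n) := by
    intro k _ l _ hkl
    refine Finset.disjoint_left.2 fun F hFk hFl => hkl ?_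
    exact ((mem_intNestedFamilies hn).1 hFk).1.symm.trans ((mem_intNestedFamilies hn).1 hFl).1
  rw [Nat.subtype_card ((Finset.Icc 1 (n - 1)).biUnion (intNestedFamilies n)),
    Finset.card_biUnion hdisj]
  · exact Finset.sum_congr rfl fun k hk => card_intNestedFamilies_eq_div hn (Finset.mem_Icc.1 hk).1
  · intro F
    simp only [Finset.mem_biUnion, Finset.mem_Icc, mem_intNestedFamilies hn, and_assoc]
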